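/- Let γ > 0, let M ∈ ℝ_{≥0}^{n×s}, and let p ∈ Σ_n and q ∈ Σ_s both have strictly positive entries. Let K = e^{−M/γ} entrywise. Then the unique minimizer T* of ⟨T,M⟩ − γ h(T) over U(p,q) has the scaling form T*_{ij} = u_i K_{ij} v_j for some strictly positive vectors u ∈ ℝ^n and v ∈ ℝ^s. -/

import Mathlib

open Finset

noncomputable section

/-- The simplex Σ_n: nonnegative vectors in ℝ^n summing to 1. -/
def simplex (n : ℕ) : Set (Fin n → ℝ) :=
  {p | (∀ i, 0 ≤ p i) ∧ ∑ i, p i = 1}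

/-- The transport polytope U(p,q): nonnegative n×s matrices with row sums p
and column sums q. -/
def transportPolytope {n s : ℕ} (p : Fin n → ℝ) (q : Fin s → ℝ) :
    Set (Matrix (Fin n) (Fin s) ℝ) :=
  {T | (∀ i j, 0 ≤ T i j) ∧ (∀ i, ∑ j, T i j = p i) ∧ (∀ j, ∑ i, T i j = q j)}

/-- Frobenius inner product ⟨T,M⟩ = Σ_{i,j} T_{ij} M_{ij}. -/
def frob {n s : ℕ} (T M : Matrix (Fin n) (Fin s) ℝ) : ℝ :=
  ∑ i, ∑ j, T i j * M i j

/-- The entropy h(T) = −Σ_{i,j} T_{ij} log T_{ij} (Real.log 0 = 0, so 0 log 0 = 0). -/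
def entropy {n s : ℕ} (T : Matrix (Fin n) (Fin s) ℝ) : ℝ :=
  -∑ i, ∑ j, T i j * Real.log (T i j)

/-- The Wasserstein distance W(p,q) = inf_{T ∈ U(p,q)} ⟨T,M⟩. -/
def W {n s : ℕ} (M : Matrix (Fin n) (Fin s) ℝ) (p : Fin n → ℝ) (q : Fin s → ℝ) : ℝ :=
  sInf ((fun T => frob T M) '' transportPolytope p q)

/-- The smoothed Wasserstein distance W_γ(p,q) = inf_{T ∈ U(p,q)} ⟨T,M⟩ − γ h(T). -/
def Wsmooth {n s : ℕ} (γ : ℝ) (M : Matrix (Fin n) (Fin s) ℝ)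
    (p : Fin n → ℝ) (q : Fin s → ℝ) : ℝ :=
  sInf ((fun T => frob T M - γ * entropy T) '' transportPolytope p q)

/-- K = e^{−M/γ}, entrywise. -/
def Kmat {n s : ℕ} (γ : ℝ) (M : Matrix (Fin n) (Fin s) ℝ) : Matrix (Fin n) (Fin s) ℝ :=
  fun i j => Real.exp (-M i j / γ)

/-- Legendre–Fenchel conjugate H_p*(g) = sup_{q ∈ Σ_s} (⟨g,q⟩ − W_γ(p,q)). -/
def Hstar {n s : ℕ} (γ : ℝ) (M : Matrix (Fin n) (Fin s) ℝ)
    (p : Fin n → ℝ) (g : Fin s → ℝ) : ℝ :=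
  sSup ((fun q => (∑ j, g j * q j) - Wsmooth γ M p q) '' simplex s)

/-- The gradient formula ∇H_p*(g) = α ⊙ Kᵀ (p ⊘ Kα), where α = e^{g/γ} entrywise. -/
def HstarGrad {n s : ℕ} (γ : ℝ) (M : Matrix (Fin n) (Fin s) ℝ)
    (p : Fin n → ℝ) (g : Fin s → ℝ) : Fin s → ℝ :=
  fun j => Real.exp (g j / γ) *
    Matrix.mulVec (Kmat γ M).transpose
      (fun i => p i / Matrix.mulVec (Kmat γ M) (fun j' => Real.exp (g j' / γ)) i) j

def Gfun (γ m x : ℝ) : ℝ := x * m + γ * (x * Real.log x)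

lemma obj_eq {n s : ℕ} (γ : ℝ) (T M : Matrix (Fin n) (Fin s) ℝ) :
    frob T M - γ * entropy T = ∑ i, ∑ j, Gfun γ (M i j) (T i j) := by
  unfold frob entropy Gfun
  simp only [Finset.sum_add_distrib, Finset.mul_sum, mul_neg, sub_neg_eq_add]

lemma Gfun_strictConvex {γ : ℝ} (hγ : 0 < γ) (m : ℝ) :
    StrictConvexOn ℝ (Set.Ici 0) (Gfun γ m) := by
  refine ⟨convex_Ici 0, ?_⟩
  intro x hx y hy hxy a b ha hb hab
  have h := Real.strictConvexOn_mul_log.2 hx hy hxy ha hb hab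
  simp only [smul_eq_mul] at h ⊢
  unfold Gfun
  have := mul_lt_mul_of_pos_left h hγ
  linarith

lemma Gfun_continuous (γ m : ℝ) : Continuous (Gfun γ m) := by
  unfold Gfun
  have := Real.continuous_mul_log
  fun_prop

lemma Gfun_hasDerivAt (γ m e : ℝ) {x : ℝ} (hx : 0 < x) :
    HasDerivAt (fun t : ℝ => Gfun γ m (x + t * e)) (e * (m + γ * (Real.log x + 1))) 0 := by
  have h1 : HasDerivAt (fun t : ℝ => x + t * e) e 0 := by
    simpa using ((hasDerivAt_id (0:ℝ)).mul_const e).const_add x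
  have h2 : HasDerivAt (fun y : ℝ => y * m + γ * (y * Real.log y))
      (m + γ * (Real.log x + 1)) x := by
    have h := ((hasDerivAt_id x).mul_const m).add
      ((Real.hasDerivAt_mul_log hx.ne').const_mul γ)
    rw [one_mul] at h
    exact h
  have h3 : HasDerivAt (fun y : ℝ => y * m + γ * (y * Real.log y))
      (m + γ * (Real.log x + 1)) (x + 0 * e) := by simpa using h2
  have := HasDerivAt.comp (0:ℝ) h3 h1
  unfold Gfun
  rw [mul_comm]
  exact this

lemma tp_combo {n s : ℕ} {p : Fin n → ℝ} {q : Fin s → ℝ} {T P : Matrix (Fin n) (Fin s) ℝ}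
    (hT : T ∈ transportPolytope p q) (hP : P ∈ transportPolytope p q)
    {a b : ℝ} (ha : 0 ≤ a) (hb : 0 ≤ b) (hab : a + b = 1) :
    (fun i j => a * T i j + b * P i j : Matrix (Fin n) (Fin s) ℝ) ∈ transportPolytope p q := by
  obtain ⟨h1, h2, h3⟩ := hT
  obtain ⟨g1, g2, g3⟩ := hP
  refine ⟨fun i j => add_nonneg (mul_nonneg ha (h1 i j)) (mul_nonneg hb (g1 i j)),
    fun i => ?_, fun j => ?_⟩
  · simp only [Finset.sum_add_distrib, ← Finset.mul_sum, h2, g2]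
    rw [← add_mul, hab, one_mul]
  · simp only [Finset.sum_add_distrib, ← Finset.mul_sum, h3, g3]
    rw [← add_mul, hab, one_mul]

lemma tp_prod {n s : ℕ} {p : Fin n → ℝ} {q : Fin s → ℝ}
    (hp : p ∈ simplex n) (hq : q ∈ simplex s) :
    (fun i j => p i * q j : Matrix (Fin n) (Fin s) ℝ) ∈ transportPolytope p q := by
  refine ⟨fun i j => mul_nonneg (hp.1 i) (hq.1 j), fun i => ?_, fun j => ?_⟩
  · rw [← Finset.mul_sum, hq.2, mul_one]
  · rw [← Finset.sum_mul, hp.2, one_mul]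

lemma tp_compact {n s : ℕ} (p : Fin n → ℝ) (q : Fin s → ℝ) :
    IsCompact (transportPolytope p q) := by
  have hsub : transportPolytope p q ⊆
      Set.univ.pi (fun i : Fin n => Set.univ.pi (fun _ : Fin s => Set.Icc (0:ℝ) (p i))) := by
    intro T hT i _ j _
    refine ⟨hT.1 i j, ?_⟩
    rw [← hT.2.1 i]
    exact Finset.single_le_sum (f := fun j => T i j) (fun j _ => hT.1 i j) (Finset.mem_univ j)
  refine IsCompact.of_isClosed_subset
    (isCompact_univ_pi fun i => isCompact_univ_pi fun _ => isCompact_Icc) ?_ hsub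
  have hc : ∀ i j, Continuous (fun T : Matrix (Fin n) (Fin s) ℝ => T i j) := by
    intro i j
    exact (continuous_apply j).comp (continuous_apply i)
  have : transportPolytope p q = (⋂ i, ⋂ j, {T : Matrix (Fin n) (Fin s) ℝ | 0 ≤ T i j}) ∩
      ((⋂ i, {T : Matrix (Fin n) (Fin s) ℝ | ∑ j, T i j = p i}) ∩
        ⋂ j, {T : Matrix (Fin n) (Fin s) ℝ | ∑ i, T i j = q j}) := by
    ext T
    simp [transportPolytope]
  rw [this]
  refine IsClosed.inter ?_ (IsClosed.inter ?_ ?_)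
  · exact isClosed_iInter fun i => isClosed_iInter fun j => isClosed_le continuous_const (hc i j)
  · exact isClosed_iInter fun i => isClosed_eq
      (continuous_finsetSum _ fun j _ => hc i j) continuous_const
  · exact isClosed_iInter fun j => isClosed_eq
      (continuous_finsetSum _ fun i _ => hc i j) continuous_const

lemma min_pos {n s : ℕ} {γ : ℝ} (hγ : 0 < γ) (M : Matrix (Fin n) (Fin s) ℝ)
    {p : Fin n → ℝ} {q : Fin s → ℝ} {T P : Matrix (Fin n) (Fin s) ℝ}
    (hT : T ∈ transportPolytope p q) (hP : P ∈ transportPolytope p q)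
    (hPpos : ∀ i j, 0 < P i j)
    (hmin : ∀ T' ∈ transportPolytope p q,
      ∑ i, ∑ j, Gfun γ (M i j) (T i j) ≤ ∑ i, ∑ j, Gfun γ (M i j) (T' i j)) :
    ∀ i j, 0 < T i j := by
  intro i0 j0
  rcases (hT.1 i0 j0).lt_or_eq with h | h
  · exact h
  exfalso
  have key : ∀ t : ℝ, 0 < t → t < 1 →
      ∑ i, ∑ j, Gfun γ (M i j) (T i j) - ∑ i, ∑ j, Gfun γ (M i j) (P i j)
        ≤ γ * P i0 j0 * Real.log t := by
    intro t ht0 ht1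
    have h1 := hmin _ (tp_combo hT hP (a := 1 - t) (b := t) (by linarith) ht0.le (by ring))
    have h2 : ∀ i j, Gfun γ (M i j) ((1 - t) * T i j + t * P i j) ≤
        (1 - t) * Gfun γ (M i j) (T i j) + t * Gfun γ (M i j) (P i j)
        + (if i = i0 then (if j = j0 then t * (γ * P i0 j0 * Real.log t) else 0) else 0) := by
      intro i j
      have hconv := (Gfun_strictConvex hγ (M i j)).convexOn.2 (hT.1 i j) (hP.1 i j)
        (show 0 ≤ 1 - t by linarith) ht0.le (by ring)
      simp only [smul_eq_mul] at hconv
      split_ifs with hi hj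
      · subst hi hj
        rw [← h]
        unfold Gfun
        have := Real.log_mul ht0.ne' (hPpos i j).ne'
        simp only [mul_zero, zero_add, zero_mul, this]
        apply le_of_eq
        ring
      · linarith
      · linarith
    have h3 := Finset.sum_le_sum (s := Finset.univ) fun i _ =>
      Finset.sum_le_sum (s := Finset.univ) fun j _ => h2 i j
    simp only [Finset.sum_add_distrib, ← Finset.mul_sum] at h3
    have h4 : ∑ i, ∑ j, (if i = i0 then
        (if j = j0 then t * (γ * P i0 j0 * Real.log t) else 0) else 0)
        = t * (γ * P i0 j0 * Real.log t) := by
      rw [Finset.sum_eq_single i0 (by intro b _ hb; simp [hb]) (by simp)]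
      simp
    rw [h4] at h3
    have h5 := h1.trans h3
    have h6 : t * (∑ i, ∑ j, Gfun γ (M i j) (T i j) - ∑ i, ∑ j, Gfun γ (M i j) (P i j))
        ≤ t * (γ * P i0 j0 * Real.log t) := by linarith
    exact le_of_mul_le_mul_left h6 ht0
  generalize (∑ i, ∑ j, Gfun γ (M i j) (T i j) - ∑ i, ∑ j, Gfun γ (M i j) (P i j)) = C at key
  have hc : 0 < γ * P i0 j0 := mul_pos hγ (hPpos i0 j0)
  have := key (Real.exp (-((|C| + 1) / (γ * P i0 j0)))) (Real.exp_pos _)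
    (Real.exp_lt_one_iff.2 (by
      have : 0 < (|C| + 1) / (γ * P i0 j0) := by positivity
      linarith))
  rw [Real.log_exp, mul_neg, mul_div_cancel₀ _ hc.ne'] at this
  have := neg_abs_le C
  linarith

lemma cross_sum {n s : ℕ} (i0 i1 : Fin n) (j0 j1 : Fin s) (A : Fin n → Fin s → ℝ) :
    ∑ i, ∑ j, (((if i = i0 then (1:ℝ) else 0) - (if i = i1 then 1 else 0)) *
      ((if j = j0 then 1 else 0) - (if j = j1 then 1 else 0))) * A i j
    = (A i0 j0 - A i0 j1) - (A i1 j0 - A i1 j1) := by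
  have h : ∀ i, ∑ j, (((if i = i0 then (1:ℝ) else 0) - (if i = i1 then 1 else 0)) *
      ((if j = j0 then 1 else 0) - (if j = j1 then 1 else 0))) * A i j
      = ((if i = i0 then (1:ℝ) else 0) - (if i = i1 then 1 else 0)) * (A i j0 - A i j1) := by
    intro i
    simp only [mul_assoc, ← Finset.mul_sum]
    congr 1
    simp [sub_mul, Finset.sum_sub_distrib]
  simp only [h]
  simp [sub_mul, Finset.sum_sub_distrib]

lemma min_cross {n s : ℕ} {γ : ℝ} (M : Matrix (Fin n) (Fin s) ℝ)
    {p : Fin n → ℝ} {q : Fin s → ℝ} {T : Matrix (Fin n) (Fin s) ℝ}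
    (hT : T ∈ transportPolytope p q) (hpos : ∀ i j, 0 < T i j)
    (hmin : ∀ T' ∈ transportPolytope p q,
      ∑ i, ∑ j, Gfun γ (M i j) (T i j) ≤ ∑ i, ∑ j, Gfun γ (M i j) (T' i j))
    (i0 i1 : Fin n) (j0 j1 : Fin s) :
    (M i0 j0 + γ * (Real.log (T i0 j0) + 1)) + (M i1 j1 + γ * (Real.log (T i1 j1) + 1))
    = (M i0 j1 + γ * (Real.log (T i0 j1) + 1)) + (M i1 j0 + γ * (Real.log (T i1 j0) + 1)) := by
  set x : Fin n → ℝ := fun i => (if i = i0 then 1 else 0) - (if i = i1 then 1 else 0) with hx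
  set y : Fin s → ℝ := fun j => (if j = j0 then 1 else 0) - (if j = j1 then 1 else 0) with hy
  have hxs : ∑ i, x i = 0 := by simp [hx]
  have hys : ∑ j, y j = 0 := by simp [hy]
  have hd : HasDerivAt (fun t : ℝ => ∑ i, ∑ j, Gfun γ (M i j) (T i j + t * (x i * y j)))
      (∑ i, ∑ j, (x i * y j) * (M i j + γ * (Real.log (T i j) + 1))) 0 :=
    HasDerivAt.fun_sum fun i _ => HasDerivAt.fun_sum fun j _ =>
      Gfun_hasDerivAt γ (M i j) (x i * y j) (hpos i j)
  have hloc : IsLocalMin (fun t : ℝ => ∑ i, ∑ j, Gfun γ (M i j) (T i j + t * (x i * y j))) 0 := by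
    have hev : ∀ᶠ t : ℝ in nhds 0, ∀ i j, 0 < T i j + t * (x i * y j) := by
      rw [Filter.eventually_all]
      intro i
      rw [Filter.eventually_all]
      intro j
      have hcont : Continuous (fun t : ℝ => T i j + t * (x i * y j)) := by fun_prop
      exact hcont.continuousAt.eventually (lt_mem_nhds (by simpa using hpos i j))
    filter_upwards [hev] with t ht
    have := hmin (fun i j => T i j + t * (x i * y j)) ⟨fun i j => (ht i j).le, fun i => ?_,
      fun j => ?_⟩
    · simpa using this
    · simp only [Finset.sum_add_distrib, ← Finset.mul_sum, hys, hT.2.1]; simp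
    · simp only [Finset.sum_add_distrib, ← Finset.mul_sum, ← Finset.sum_mul, hxs, hT.2.2]; simp
  have h0 := hloc.hasDerivAt_eq_zero hd
  rw [cross_sum i0 i1 j0 j1 (fun i j => M i j + γ * (Real.log (T i j) + 1))] at h0
  linarith

/-- for p, q with strictly positive entries, the entropy-regularized
transport problem has a unique minimizer T*, and T* has the scaling form
T*_{ij} = u_i K_{ij} v_j for strictly positive u, v. -/
theorem entropic_minimizer_scaling_form
    (n s : ℕ) (hn : 0 < n) (hs : 0 < s)
    (γ : ℝ) (hγ : 0 < γ)
    (M : Matrix (Fin n) (Fin s) ℝ) (hM : ∀ i j, 0 ≤ M i j)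
    (p : Fin n → ℝ) (q : Fin s → ℝ)
    (hp : p ∈ simplex n) (hq : q ∈ simplex s)
    (hp' : ∀ i, 0 < p i) (hq' : ∀ j, 0 < q j) :
    (∃! T : Matrix (Fin n) (Fin s) ℝ,
      T ∈ transportPolytope p q ∧
      ∀ T' ∈ transportPolytope p q,
        frob T M - γ * entropy T ≤ frob T' M - γ * entropy T') ∧
    ∀ T : Matrix (Fin n) (Fin s) ℝ,
      (T ∈ transportPolytope p q ∧
        ∀ T' ∈ transportPolytope p q,
          frob T M - γ * entropy T ≤ frob T' M - γ * entropy T') →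
      ∃ (u : Fin n → ℝ) (v : Fin s → ℝ),
        (∀ i, 0 < u i) ∧ (∀ j, 0 < v j) ∧
        ∀ i j, T i j = u i * Kmat γ M i j * v j := by
  simp only [obj_eq]
  refine ⟨?_, ?_⟩
  · have hcont : Continuous (fun T : Matrix (Fin n) (Fin s) ℝ =>
        ∑ i, ∑ j, Gfun γ (M i j) (T i j)) :=
      continuous_finsetSum _ fun i _ => continuous_finsetSum _ fun j _ =>
        (Gfun_continuous γ (M i j)).comp ((continuous_apply j).comp (continuous_apply i))
    obtain ⟨T, hT, hmin⟩ := (tp_compact p q).exists_isMinOn ⟨_, tp_prod hp hq⟩ hcont.continuousOn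
    have hmin' : ∀ T' ∈ transportPolytope p q,
        ∑ i, ∑ j, Gfun γ (M i j) (T i j) ≤ ∑ i, ∑ j, Gfun γ (M i j) (T' i j) :=
      fun T' hT' => hmin hT'
    refine ⟨T, ⟨hT, hmin'⟩, ?_⟩
    rintro S ⟨hS, hSmin⟩
    by_contra hne
    have hex : ∃ i j, S i j ≠ T i j := by
      by_contra hcon
      push Not at hcon
      exact hne (by ext i j; exact hcon i j)
    obtain ⟨i0, j0, hij⟩ := hex
    have h1 := hSmin _ (tp_combo hS hT (a := 1/2) (b := 1/2) (by norm_num) (by norm_num)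
      (by norm_num))
    have h2 := hSmin T hT
    have h3 := hmin' S hS
    have hle : ∀ i j, Gfun γ (M i j) (1/2 * S i j + 1/2 * T i j) ≤
        1/2 * Gfun γ (M i j) (S i j) + 1/2 * Gfun γ (M i j) (T i j) := fun i j =>
      (Gfun_strictConvex hγ (M i j)).convexOn.2 (hS.1 i j) (hT.1 i j)
        (by norm_num) (by norm_num) (by norm_num)
    have hlt : Gfun γ (M i0 j0) (1/2 * S i0 j0 + 1/2 * T i0 j0) <
        1/2 * Gfun γ (M i0 j0) (S i0 j0) + 1/2 * Gfun γ (M i0 j0) (T i0 j0) :=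
      (Gfun_strictConvex hγ (M i0 j0)).2 (hS.1 i0 j0) (hT.1 i0 j0) hij
        (by norm_num) (by norm_num) (by norm_num)
    have h4 : ∑ i, ∑ j, Gfun γ (M i j) (1/2 * S i j + 1/2 * T i j) <
        ∑ i, ∑ j, (1/2 * Gfun γ (M i j) (S i j) + 1/2 * Gfun γ (M i j) (T i j)) :=
      Finset.sum_lt_sum (fun i _ => Finset.sum_le_sum fun j _ => hle i j)
        ⟨i0, Finset.mem_univ _, Finset.sum_lt_sum (fun j _ => hle i0 j)
          ⟨j0, Finset.mem_univ _, hlt⟩⟩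
    simp only [Finset.sum_add_distrib, ← Finset.mul_sum] at h4
    linarith
  · rintro T ⟨hT, hmin⟩
    have hpos := min_pos hγ M hT (tp_prod hp hq) (fun i j => mul_pos (hp' i) (hq' j)) hmin
    have hcr := min_cross M hT hpos hmin
    set i0 : Fin n := ⟨0, hn⟩
    set j0 : Fin s := ⟨0, hs⟩
    refine ⟨fun i => Real.exp (Real.log (T i j0) + M i j0 / γ),
      fun j => Real.exp ((Real.log (T i0 j) + M i0 j / γ) - (Real.log (T i0 j0) + M i0 j0 / γ)),
      fun i => Real.exp_pos _, fun j => Real.exp_pos _, fun i j => ?_⟩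
    unfold Kmat
    rw [← Real.exp_add, ← Real.exp_add]
    conv_lhs => rw [← Real.exp_log (hpos i j)]
    congr 1
    have := hcr i i0 j j0
    field_simp
    linarith
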